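/- Applicative similarity ≲app = (≲app_v, ≲app_c) for the fine-grain call-by-value combinatory logic xCL_fg is a congruence, i.e., it is compatible with all operators of both sorts: ≲app_v(S,S), ≲app_v(K,K), ≲app_v(I,I); ≲app_c(t,s) implies ≲app_v(K'(t),K'(s)) and ≲app_v(S'(t),S'(s)); ≲app_c(t,s) and ≲app_c(t',s') imply ≲app_v(S''(t,t'),S''(s,s')) and ≲app_c(t • t', s • s'); ≲app_v(v,w) implies ≲app_c([v],[w]); ≲app_v(v,w) and ≲app_c(t,s) imply ≲app_c(v ▷ t, w ▷ s) and ≲app_c(t ◁ v, s ◁ w); and ≲app_v(v,w) and ≲app_v(v',w') imply ≲app_c(v ∘ v', w ∘ w'). -/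

import Mathlib

namespace FG

mutual
/-- Values of the fine-grain call-by-value combinatory logic xCL_fg. -/
inductive V : Type
  | I : V
  | K : V
  | S : V
  | K1 (t : C) : V
  | S1 (t : C) : V
  | S2 (s t : C) : V
/-- Computations of xCL_fg. -/
inductive C : Type
  | ret (v : V) : C            -- [v]
  | bull (t s : C) : C         -- t • s
  | rtri (v : V) (s : C) : C   -- v ▷ s
  | ltri (t : C) (v : V) : C   -- t ◁ v
  | circ (v w : V) : C         -- v ∘ w
end

/-- Labeled transitions `v —u→ t` from values to computations (`LStep v u t`). -/
inductive LStep : V → V → C → Prop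
  | S (v : V) : LStep .S v (.ret (.S1 (.ret v)))
  | S1 (t : C) (v : V) : LStep (.S1 t) v (.ret (.S2 t (.ret v)))
  | S2 (t s : C) (v : V) : LStep (.S2 t s) v (.bull (.ltri t v) (.ltri s v))
  | K (v : V) : LStep .K v (.ret (.K1 (.ret v)))
  | K1 (t : C) (v : V) : LStep (.K1 t) v t
  | I (v : V) : LStep .I v (.ret v)

/-- Unlabeled transitions from computations to values: `t → v`. -/
inductive StepV : C → V → Prop
  | ret (v : V) : StepV (.ret v) v

/-- Unlabeled transitions from computations to computations: `t → t'`. -/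
inductive StepC : C → C → Prop
  | bullL {t t' : C} (s : C) : StepC t t' → StepC (.bull t s) (.bull t' s)
  | bullV {t : C} {v : V} (s : C) : StepV t v → StepC (.bull t s) (.rtri v s)
  | ltriL {t t' : C} (v : V) : StepC t t' → StepC (.ltri t v) (.ltri t' v)
  | ltriV {t : C} {v : V} (w : V) : StepV t v → StepC (.ltri t w) (.circ v w)
  | rtriR {s s' : C} (v : V) : StepC s s' → StepC (.rtri v s) (.rtri v s')
  | rtriV {s : C} {w : V} (v : V) : StepV s w → StepC (.rtri v s) (.circ v w)
  | circ {v w : V} {t : C} : LStep v w t → StepC (.circ v w) t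

/-- `t ⇒ t'` between computations. -/
def StepsC : C → C → Prop := Relation.ReflTransGen StepC

/-- `t ⇒ v`: `t` reduces in finitely many steps to the value `v`. -/
def StepsV (t : C) (v : V) : Prop := ∃ t', StepsC t t' ∧ StepV t' v

/-- `t⇓`: the computation `t` reduces to some value. -/
def ConvC (t : C) : Prop := ∃ v, StepsV t v

/-- Applicative simulations for xCL_fg. -/
def IsSim (RV : V → V → Prop) (RC : C → C → Prop) : Prop :=
  (∀ v w, RV v w → ∀ u t, LStep v u t → ∃ s, LStep w u s ∧ RC t s) ∧
  (∀ t s, RC t s →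
    (∀ v, StepV t v → ∃ w, StepsV s w ∧ RV v w) ∧
    (∀ t', StepC t t' → ∃ s', StepsC s s' ∧ RC t' s'))

/-- Applicative similarity on values. -/
def AppSimV (v w : V) : Prop := ∃ RV RC, IsSim RV RC ∧ RV v w

/-- Applicative similarity on computations. -/
def AppSimC (t s : C) : Prop := ∃ RV RC, IsSim RV RC ∧ RC t s

/-- A sorted relation is a congruence if it is compatible with all operators of both sorts. -/
def IsCong (RV : V → V → Prop) (RC : C → C → Prop) : Prop :=
  RV .S .S ∧ RV .K .K ∧ RV .I .I ∧
  (∀ t s, RC t s → RV (.K1 t) (.K1 s)) ∧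
  (∀ t s, RC t s → RV (.S1 t) (.S1 s)) ∧
  (∀ t s t' s', RC t s → RC t' s' → RV (.S2 t t') (.S2 s s')) ∧
  (∀ v w, RV v w → RC (.ret v) (.ret w)) ∧
  (∀ t s t' s', RC t s → RC t' s' → RC (.bull t t') (.bull s s')) ∧
  (∀ v w t s, RV v w → RC t s → RC (.rtri v t) (.rtri w s)) ∧
  (∀ v w t s, RV v w → RC t s → RC (.ltri t v) (.ltri s w)) ∧
  (∀ v w v' w', RV v w → RV v' w' → RC (.circ v v') (.circ w w'))

/-- Containment in the preorder `O` (the value component of `O` is total). -/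
def SubO (RV : V → V → Prop) (RC : C → C → Prop) : Prop :=
  (∀ v w, RV v w → True) ∧ (∀ t s, RC t s → ConvC t → ConvC s)

/-- The contextual preorder (value sort): the greatest congruence contained in `O`. -/
def CtxLeV (v w : V) : Prop := ∃ RV RC, IsCong RV RC ∧ SubO RV RC ∧ RV v w

/-- The contextual preorder (computation sort). -/
def CtxLeC (t s : C) : Prop := ∃ RV RC, IsCong RV RC ∧ SubO RV RC ∧ RC t s

/-- The step-indexed approximations `Lⁿ = (Lⁿ_v, Lⁿ_c)`. -/
def LrelN : ℕ → (V → V → Prop) × (C → C → Prop)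
  | 0 => (fun _ _ => True, fun _ _ => True)
  | n+1 =>
    ( fun v w => ∀ u z, (LrelN n).1 u z → ∀ t, LStep v u t →
        ∃ s, LStep w z s ∧ (LrelN n).2 t s,
      fun t s =>
        (∀ v, StepV t v → ∃ w, StepsV s w ∧ (LrelN n).1 v w) ∧
        (∀ t', StepC t t' → ∃ s', StepsC s s' ∧ (LrelN n).2 t' s') )

/-- The step-indexed logical relation, value sort: `L_v = ⋂ₙ Lⁿ_v`. -/
def LV (v w : V) : Prop := ∀ n, (LrelN n).1 v w

/-- The step-indexed logical relation, computation sort: `L_c = ⋂ₙ Lⁿ_c`. -/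
def LC (t s : C) : Prop := ∀ n, (LrelN n).2 t s

end FG

/-!
Howe's method. The Howe closure of similarity is the least relation `H` that contains `Ĥ ; ≲app`,
where `Ĥ` relates terms with the same outermost operator and `H`-related arguments. By construction
`H` is a congruence containing `≲app`. It is also an applicative simulation: by induction on its
derivation, a transition of `t` is matched by every `r` with `Ĥ t r`, and then by every `s` with
`r ≲app s`. For the rule `v ∘ w → t` this requires the stronger property that `H`-related values
match each other's transitions even when the labels are only `H`-related instead of equal. Hence
`H` is contained in `≲app`, so the two coincide.
-/

namespace FG

variable {RV QV : V → V → Prop} {RC QC : C → C → Prop} {v w u u' : V} {t t' r r' s s' : C}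

theorem StepsC.bull (s : C) (h : StepsC t t') : StepsC (.bull t s) (.bull t' s) :=
  Relation.ReflTransGen.lift (C.bull · s) (fun _ _ => .bullL s) _ _ h

theorem StepsC.ltri (v : V) (h : StepsC t t') : StepsC (.ltri t v) (.ltri t' v) :=
  Relation.ReflTransGen.lift (C.ltri · v) (fun _ _ => .ltriL v) _ _ h

theorem StepsC.rtri (v : V) (h : StepsC t t') : StepsC (.rtri v t) (.rtri v t') :=
  Relation.ReflTransGen.lift (C.rtri v) (fun _ _ => .rtriR v) _ _ h

theorem StepsV.bull (s : C) : StepsV t v → StepsC (.bull t s) (.rtri v s)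
  | ⟨_, hsteps, hstep⟩ => (hsteps.bull s).tail (.bullV s hstep)

theorem StepsV.ltri (w : V) : StepsV t v → StepsC (.ltri t w) (.circ v w)
  | ⟨_, hsteps, hstep⟩ => (hsteps.ltri w).tail (.ltriV w hstep)

theorem StepsV.rtri (v : V) : StepsV t w → StepsC (.rtri v t) (.circ v w)
  | ⟨_, hsteps, hstep⟩ => (hsteps.rtri v).tail (.rtriV v hstep)

theorem StepsC.trans_stepsV (h : StepsC t t') : StepsV t' v → StepsV t v
  | ⟨r, hsteps, hstep⟩ => ⟨r, h.trans hsteps, hstep⟩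

theorem IsSim.exists_lstep (h : IsSim RV RC) (hvw : RV v w) (hstep : LStep v u t) :
    ∃ s, LStep w u s ∧ RC t s :=
  h.1 v w hvw u t hstep

theorem IsSim.exists_stepsV_of_stepV (h : IsSim RV RC) (hts : RC t s) (hstep : StepV t v) :
    ∃ w, StepsV s w ∧ RV v w :=
  (h.2 t s hts).1 v hstep

theorem IsSim.exists_stepsC_of_stepC (h : IsSim RV RC) (hts : RC t s) (hstep : StepC t t') :
    ∃ s', StepsC s s' ∧ RC t' s' :=
  (h.2 t s hts).2 t' hstep

theorem IsSim.exists_stepsC (h : IsSim RV RC) (hts : RC t s) (hsteps : StepsC t t') :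
    ∃ s', StepsC s s' ∧ RC t' s' := by
  induction hsteps with
  | refl => exact ⟨s, .refl, hts⟩
  | tail _ hstep ih =>
    obtain ⟨r, hsr, hr⟩ := ih
    obtain ⟨s', hrs', hs'⟩ := h.exists_stepsC_of_stepC hr hstep
    exact ⟨s', hsr.trans hrs', hs'⟩

theorem IsSim.exists_stepsV (h : IsSim RV RC) (hts : RC t s) :
    StepsV t v → ∃ w, StepsV s w ∧ RV v w := by
  rintro ⟨t', hsteps, hstep⟩
  obtain ⟨s', hss', hts'⟩ := h.exists_stepsC hts hsteps
  obtain ⟨w, hw, hvw⟩ := h.exists_stepsV_of_stepV hts' hstep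
  exact ⟨w, hss'.trans_stepsV hw, hvw⟩

theorem isSim_eq : IsSim Eq Eq := by
  refine ⟨?_, ?_⟩
  · rintro v _ rfl u t hstep
    exact ⟨t, hstep, rfl⟩
  · rintro t _ rfl
    exact ⟨fun v hstep => ⟨v, ⟨t, .refl, hstep⟩, rfl⟩, fun t' hstep => ⟨t', .single hstep, rfl⟩⟩

theorem IsSim.comp (hR : IsSim RV RC) (hQ : IsSim QV QC) :
    IsSim (Relation.Comp RV QV) (Relation.Comp RC QC) := by
  refine ⟨?_, ?_⟩
  · rintro v w ⟨x, hvx, hxw⟩ u t hstep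
    obtain ⟨r, hxr, htr⟩ := hR.exists_lstep hvx hstep
    obtain ⟨s, hws, hrs⟩ := hQ.exists_lstep hxw hxr
    exact ⟨s, hws, r, htr, hrs⟩
  · rintro t s ⟨x, htx, hxs⟩
    refine ⟨fun v hstep => ?_, fun t' hstep => ?_⟩
    · obtain ⟨y, hxy, hvy⟩ := hR.exists_stepsV_of_stepV htx hstep
      obtain ⟨w, hsw, hyw⟩ := hQ.exists_stepsV hxs hxy
      exact ⟨w, hsw, y, hvy, hyw⟩
    · obtain ⟨y, hxy, hty⟩ := hR.exists_stepsC_of_stepC htx hstep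
      obtain ⟨s', hss', hys'⟩ := hQ.exists_stepsC hxs hxy
      exact ⟨s', hss', y, hty, hys'⟩

theorem IsSim.le_appSimV (h : IsSim RV RC) : RV ≤ AppSimV :=
  fun _ _ hvw => ⟨RV, RC, h, hvw⟩

theorem IsSim.le_appSimC (h : IsSim RV RC) : RC ≤ AppSimC :=
  fun _ _ hts => ⟨RV, RC, h, hts⟩

theorem isSim_appSim : IsSim AppSimV AppSimC := by
  refine ⟨?_, ?_⟩
  · rintro v w ⟨RV, RC, h, hvw⟩ u t hstep
    obtain ⟨s, hs, hts⟩ := h.exists_lstep hvw hstep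
    exact ⟨s, hs, h.le_appSimC _ _ hts⟩
  · rintro t s ⟨RV, RC, h, hts⟩
    refine ⟨fun v hstep => ?_, fun t' hstep => ?_⟩
    · obtain ⟨w, hw, hvw⟩ := h.exists_stepsV_of_stepV hts hstep
      exact ⟨w, hw, h.le_appSimV _ _ hvw⟩
    · obtain ⟨s', hs', hts'⟩ := h.exists_stepsC_of_stepC hts hstep
      exact ⟨s', hs', h.le_appSimC _ _ hts'⟩

instance : IsPreorder V AppSimV where
  refl v := isSim_eq.le_appSimV v v rfl
  trans _ w _ hvw hwx := (isSim_appSim.comp isSim_appSim).le_appSimV _ _ ⟨w, hvw, hwx⟩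

instance : IsPreorder C AppSimC where
  refl t := isSim_eq.le_appSimC t t rfl
  trans _ s _ hts hsr := (isSim_appSim.comp isSim_appSim).le_appSimC _ _ ⟨s, hts, hsr⟩

/-- The value component of the compatible refinement of `(RV, RC)`: values with the same outermost
operator and related arguments. It does not depend on `RV`, as value operators only take
computations as arguments. -/
inductive CompatV (RC : C → C → Prop) : V → V → Prop
  | I : CompatV RC .I .I
  | K : CompatV RC .K .K
  | S : CompatV RC .S .S
  | K1 {t s : C} : RC t s → CompatV RC (.K1 t) (.K1 s)
  | S1 {t s : C} : RC t s → CompatV RC (.S1 t) (.S1 s)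
  | S2 {t s t' s' : C} : RC t s → RC t' s' → CompatV RC (.S2 t t') (.S2 s s')

/-- The computation component of the compatible refinement of `(RV, RC)`: computations with the
same outermost operator and related arguments. -/
inductive CompatC (RV : V → V → Prop) (RC : C → C → Prop) : C → C → Prop
  | ret {v w : V} : RV v w → CompatC RV RC (.ret v) (.ret w)
  | bull {t s t' s' : C} : RC t s → RC t' s' → CompatC RV RC (.bull t t') (.bull s s')
  | rtri {v w : V} {t s : C} : RV v w → RC t s → CompatC RV RC (.rtri v t) (.rtri w s)
  | ltri {v w : V} {t s : C} : RV v w → RC t s → CompatC RV RC (.ltri t v) (.ltri s w)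
  | circ {v w v' w' : V} : RV v w → RV v' w' → CompatC RV RC (.circ v v') (.circ w w')

theorem isCong_iff : IsCong RV RC ↔ CompatV RC ≤ RV ∧ CompatC RV RC ≤ RC := by
  constructor
  · rintro ⟨hS, hK, hI, hK1, hS1, hS2, hret, hbull, hrtri, hltri, hcirc⟩
    refine ⟨?_, ?_⟩
    · rintro _ _ (_ | _ | _ | h | h | ⟨h, h'⟩)
      exacts [hI, hK, hS, hK1 _ _ h, hS1 _ _ h, hS2 _ _ _ _ h h']
    · rintro _ _ (h | ⟨h, h'⟩ | ⟨h, h'⟩ | ⟨h, h'⟩ | ⟨h, h'⟩)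
      exacts [hret _ _ h, hbull _ _ _ _ h h', hrtri _ _ _ _ h h', hltri _ _ _ _ h h',
        hcirc _ _ _ _ h h']
  · rintro ⟨hV, hC⟩
    exact ⟨hV _ _ .S, hV _ _ .K, hV _ _ .I,
      fun _ _ h => hV _ _ (.K1 h),
      fun _ _ h => hV _ _ (.S1 h),
      fun _ _ _ _ h h' => hV _ _ (.S2 h h'),
      fun _ _ h => hC _ _ (.ret h),
      fun _ _ _ _ h h' => hC _ _ (.bull h h'),
      fun _ _ _ _ h h' => hC _ _ (.rtri h h'),
      fun _ _ _ _ h h' => hC _ _ (.ltri h h'),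
      fun _ _ _ _ h h' => hC _ _ (.circ h h')⟩

mutual

theorem IsCong.reflV (h : IsCong RV RC) (v : V) : RV v v :=
  (isCong_iff.1 h).1 v v <| match v with
    | .I => .I
    | .K => .K
    | .S => .S
    | .K1 t => .K1 (h.reflC t)
    | .S1 t => .S1 (h.reflC t)
    | .S2 s t => .S2 (h.reflC s) (h.reflC t)

theorem IsCong.reflC (h : IsCong RV RC) (t : C) : RC t t :=
  (isCong_iff.1 h).2 t t <| match t with
    | .ret v => .ret (h.reflV v)
    | .bull s t => .bull (h.reflC s) (h.reflC t)
    | .rtri v t => .rtri (h.reflV v) (h.reflC t)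
    | .ltri t v => .ltri (h.reflV v) (h.reflC t)
    | .circ v w => .circ (h.reflV v) (h.reflV w)

end

theorem IsCong.exists_lstep_of_compatV (h : IsCong RV RC) (hvw : CompatV RC v w) (hu : RV u u')
    (hstep : LStep v u t) : ∃ s, LStep w u' s ∧ RC t s := by
  obtain ⟨hV, hC⟩ := isCong_iff.1 h
  have hret : RC (.ret u) (.ret u') := hC _ _ (.ret hu)
  cases hstep with
  | I => cases hvw with | I => exact ⟨_, .I u', hret⟩
  | K => cases hvw with | K => exact ⟨_, .K u', hC _ _ (.ret (hV _ _ (.K1 hret)))⟩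
  | S => cases hvw with | S => exact ⟨_, .S u', hC _ _ (.ret (hV _ _ (.S1 hret)))⟩
  | K1 => cases hvw with | K1 ht => exact ⟨_, .K1 _ u', ht⟩
  | S1 => cases hvw with
    | S1 ht => exact ⟨_, .S1 _ u', hC _ _ (.ret (hV _ _ (.S2 ht hret)))⟩
  | S2 => cases hvw with
    | S2 ht ht' =>
      exact ⟨_, .S2 _ _ u', hC _ _ (.bull (hC _ _ (.ltri hu ht)) (hC _ _ (.ltri hu ht')))⟩

theorem CompatC.exists_stepV (h : CompatC RV RC t s) (hstep : StepV t v) :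
    ∃ w, StepV s w ∧ RV v w := by
  cases hstep
  cases h with | ret hvw => exact ⟨_, .ret _, hvw⟩

mutual

/-- The value component of the Howe closure of `(RV, RC)`: the least relation containing its own
compatible refinement followed by `RV`. -/
inductive HoweV (RV : V → V → Prop) (RC : C → C → Prop) : V → V → Prop
  | mk {v v' w : V} : CompatV (HoweC RV RC) v v' → RV v' w → HoweV RV RC v w

/-- The computation component of the Howe closure of `(RV, RC)`: the least relation containing its
own compatible refinement followed by `RC`. -/
inductive HoweC (RV : V → V → Prop) (RC : C → C → Prop) : C → C → Prop
  | mk {t t' s : C} : CompatC (HoweV RV RC) (HoweC RV RC) t t' → RC t' s → HoweC RV RC t s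

end

theorem HoweV.trans_right [IsTrans V RV] (hvw : HoweV RV RC v w) (hwu : RV w u) :
    HoweV RV RC v u := by
  obtain ⟨hcompat, hw⟩ := hvw
  exact ⟨hcompat, _root_.trans hw hwu⟩

theorem HoweC.trans_right [IsTrans C RC] (hts : HoweC RV RC t s) (hss' : RC s s') :
    HoweC RV RC t s' := by
  obtain ⟨hcompat, hs⟩ := hts
  exact ⟨hcompat, _root_.trans hs hss'⟩

theorem HoweV.of_compatV [Std.Refl RV] (h : CompatV (HoweC RV RC) v w) : HoweV RV RC v w :=
  ⟨h, refl_of RV w⟩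

theorem HoweC.of_compatC [Std.Refl RC] (h : CompatC (HoweV RV RC) (HoweC RV RC) t s) :
    HoweC RV RC t s :=
  ⟨h, refl_of RC s⟩

theorem isCong_howe [Std.Refl RV] [Std.Refl RC] : IsCong (HoweV RV RC) (HoweC RV RC) :=
  isCong_iff.2 ⟨fun _ _ => .of_compatV, fun _ _ => .of_compatC⟩

theorem le_howeV [IsPreorder V RV] [Std.Refl RC] : RV ≤ HoweV RV RC :=
  fun v _ hvw => (isCong_howe.reflV v).trans_right hvw

theorem le_howeC [Std.Refl RV] [IsPreorder C RC] : RC ≤ HoweC RV RC :=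
  fun t _ hts => (isCong_howe.reflC t).trans_right hts

theorem HoweV.exists_lstep [Std.Refl RV] [IsPreorder C RC] (hR : IsSim RV RC)
    (hvw : HoweV RV RC v w) (hu : HoweV RV RC u u') (hstep : LStep v u t) :
    ∃ s, LStep w u' s ∧ HoweC RV RC t s := by
  obtain ⟨hvx, hxw⟩ := hvw
  obtain ⟨r, hxr, htr⟩ := isCong_howe.exists_lstep_of_compatV hvx hu hstep
  obtain ⟨s, hws, hrs⟩ := hR.exists_lstep hxw hxr
  exact ⟨s, hws, htr.trans_right hrs⟩

theorem HoweC.exists_stepsV_of_stepV [IsTrans V RV] (hR : IsSim RV RC) (hts : HoweC RV RC t s)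
    (hstep : StepV t v) : ∃ w, StepsV s w ∧ HoweV RV RC v w := by
  obtain ⟨htr, hrs⟩ := hts
  obtain ⟨x, hrx, hvx⟩ := htr.exists_stepV hstep
  obtain ⟨w, hsw, hxw⟩ := hR.exists_stepsV_of_stepV hrs hrx
  exact ⟨w, hsw, hvx.trans_right hxw⟩

theorem HoweC.exists_stepsC_trans_right [IsTrans C RC] (hR : IsSim RV RC)
    (htr' : HoweC RV RC t r') (hrr' : StepsC r r') (hrs : RC r s) :
    ∃ s', StepsC s s' ∧ HoweC RV RC t s' := by
  obtain ⟨s', hss', hrs'⟩ := hR.exists_stepsC hrs hrr'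
  exact ⟨s', hss', htr'.trans_right hrs'⟩

theorem HoweC.exists_stepsC_of_stepC [IsPreorder V RV] [IsPreorder C RC] (hR : IsSim RV RC)
    (hts : HoweC RV RC t s) (hstep : StepC t t') :
    ∃ s', StepsC s s' ∧ HoweC RV RC t' s' := by
  induction hstep generalizing s with obtain ⟨hcompat, hrs⟩ := hts
  | bullL _ _ ih => cases hcompat with
    | bull ht hu =>
      obtain ⟨r', hr', ht'⟩ := ih ht
      exact exists_stepsC_trans_right hR (.of_compatC (.bull ht' hu)) (hr'.bull _) hrs
  | bullV _ hstep => cases hcompat with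
    | bull ht hu =>
      obtain ⟨w, hw, hvw⟩ := ht.exists_stepsV_of_stepV hR hstep
      exact exists_stepsC_trans_right hR (.of_compatC (.rtri hvw hu)) (hw.bull _) hrs
  | ltriL _ _ ih => cases hcompat with
    | ltri hv ht =>
      obtain ⟨r', hr', ht'⟩ := ih ht
      exact exists_stepsC_trans_right hR (.of_compatC (.ltri hv ht')) (hr'.ltri _) hrs
  | ltriV _ hstep => cases hcompat with
    | ltri hu ht =>
      obtain ⟨w, hw, hvw⟩ := ht.exists_stepsV_of_stepV hR hstep
      exact exists_stepsC_trans_right hR (.of_compatC (.circ hvw hu)) (hw.ltri _) hrs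
  | rtriR _ _ ih => cases hcompat with
    | rtri hv ht =>
      obtain ⟨r', hr', ht'⟩ := ih ht
      exact exists_stepsC_trans_right hR (.of_compatC (.rtri hv ht')) (hr'.rtri _) hrs
  | rtriV _ hstep => cases hcompat with
    | rtri hu ht =>
      obtain ⟨w, hw, hvw⟩ := ht.exists_stepsV_of_stepV hR hstep
      exact exists_stepsC_trans_right hR (.of_compatC (.circ hu hvw)) (hw.rtri _) hrs
  | circ hstep => cases hcompat with
    | circ hv hu =>
      obtain ⟨r', hr', ht'⟩ := hv.exists_lstep hR hu hstep
      exact exists_stepsC_trans_right hR ht' (.single (.circ hr')) hrs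

theorem isSim_howe [IsPreorder V RV] [IsPreorder C RC] (hR : IsSim RV RC) :
    IsSim (HoweV RV RC) (HoweC RV RC) :=
  ⟨fun _ _ hvw u _ => hvw.exists_lstep hR (isCong_howe.reflV u),
    fun _ _ hts => ⟨fun _ => hts.exists_stepsV_of_stepV hR, fun _ => hts.exists_stepsC_of_stepC hR⟩⟩

theorem howeV_appSim : HoweV AppSimV AppSimC = AppSimV :=
  le_antisymm (isSim_howe isSim_appSim).le_appSimV le_howeV

theorem howeC_appSim : HoweC AppSimV AppSimC = AppSimC :=
  le_antisymm (isSim_howe isSim_appSim).le_appSimC le_howeC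

theorem isCong_appSim : IsCong AppSimV AppSimC := by
  simpa only [howeV_appSim, howeC_appSim] using isCong_howe (RV := AppSimV) (RC := AppSimC)

end FG

open FG in
/-- Applicative similarity for xCL_fg is a congruence. -/
theorem fg_appSim_isCong :
    AppSimV .S .S ∧ AppSimV .K .K ∧ AppSimV .I .I ∧
    (∀ t s, AppSimC t s → AppSimV (.K1 t) (.K1 s)) ∧
    (∀ t s, AppSimC t s → AppSimV (.S1 t) (.S1 s)) ∧
    (∀ t s t' s', AppSimC t s → AppSimC t' s' → AppSimV (.S2 t t') (.S2 s s')) ∧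
    (∀ t s t' s', AppSimC t s → AppSimC t' s' → AppSimC (.bull t t') (.bull s s')) ∧
    (∀ v w, AppSimV v w → AppSimC (.ret v) (.ret w)) ∧
    (∀ v w t s, AppSimV v w → AppSimC t s → AppSimC (.rtri v t) (.rtri w s)) ∧
    (∀ v w t s, AppSimV v w → AppSimC t s → AppSimC (.ltri t v) (.ltri s w)) ∧
    (∀ v w v' w', AppSimV v w → AppSimV v' w' → AppSimC (.circ v v') (.circ w w')) := by
  obtain ⟨hS, hK, hI, hK1, hS1, hS2, hret, hbull, hrtri, hltri, hcirc⟩ := isCong_appSim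
  exact ⟨hS, hK, hI, hK1, hS1, hS2, hbull, hret, hrtri, hltri, hcirc⟩
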